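/- The only rational solutions of 60x³ + y³ + z³ = 0 up to scalar multiplication are the scalar multiples of (0, 1, −1); that is, if x, y, z ∈ Q satisfy 60x³ + y³ + z³ = 0 then x = 0 and z = −y. -/

import Mathlib

/-!
If `y³ + z³ = 60x³` with `y` and `z` coprime, then unique factorisation in the Eisenstein integers
yields coprime `r` and `t` with `r t (r - t) = 60u³` and `3u ∣ x` (this is a descent by a
`3`-isogeny). The three factors sum to zero up to sign and are coprime, so they are `aA³`, `bB³`,
`cC³` with `abc = 60`, and `aA³ + bB³ + cC³ = 0`. There are five such curves. For
`{a, b, c} = {1, 1, 60}` this is the original equation with a divisor of `u` in place of `x`, so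
that by descent `x` is divisible by every power of `3`. The other four curves are counterexamples
to the Hasse principle, and need a second descent: each can be written as `x³ + dy³ = mz³`, which
determines `x + y∛d` up to units and cubes in `ℚ(∛d)`, where `d` is `2`, `3`, `5` or `6`. These
fields have class number one and unit rank one, and each of the three remaining classes modulo
cubes is excluded by a congruence.
-/

open Polynomial NumberField Module

/-- Coordinates `(x₀, x₁, x₂)` of an element `x₀ + x₁ t + x₂ t²`, where `t` is a cube root of some
fixed `d`. Identities between such elements become identities between explicit vectors, with the
products below in place of the pointwise product. -/
abbrev CubicCoord (R : Type*) := Fin 3 → R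

namespace CubicCoord

section CommRing

variable {R S : Type*} [CommRing R] [CommRing S]

/-- The element of `S` with integral coordinates `x` with respect to `1, t, t²`. -/
def eval (t : S) (x : CubicCoord ℤ) : S := x 0 + x 1 * t + x 2 * t ^ 2

/-- The product of `R[t] / (t³ - d)` in coordinates. -/
def mul (d : R) (x y : CubicCoord R) : CubicCoord R :=
  ![x 0 * y 0 + d * (x 1 * y 2 + x 2 * y 1), x 0 * y 1 + x 1 * y 0 + d * (x 2 * y 2),
    x 0 * y 2 + x 1 * y 1 + x 2 * y 0]

/-- The cube of an element of `R[t] / (t³ - d)` in coordinates. -/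
def cube (d : R) (x : CubicCoord R) : CubicCoord R := mul d x (mul d x x)

/-- The norm form of `R[t] / (t³ - d)` over `R`. -/
def norm (d : R) (x : CubicCoord R) : R :=
  x 0 ^ 3 + d * x 1 ^ 3 + d ^ 2 * x 2 ^ 3 - 3 * d * x 0 * x 1 * x 2

theorem eval_vec (t : S) (a b c : ℤ) : eval t ![a, b, c] = a + b * t + c * t ^ 2 := rfl

theorem eval_smul (t : S) (n : ℤ) (x : CubicCoord ℤ) : eval t (n • x) = n * eval t x := by
  simp only [eval, Pi.smul_apply, smul_eq_mul, Int.cast_mul]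
  ring

theorem map_eval (f : R →+* S) (t : R) (x : CubicCoord ℤ) : f (eval t x) = eval (f t) x := by
  simp only [eval, map_add, map_mul, map_pow, map_intCast]

theorem coe_eval {K : Type*} [Field K] (t : 𝓞 K) (x : CubicCoord ℤ) :
    ((eval t x : 𝓞 K) : K) = eval (t : K) x :=
  map_eval (algebraMap (𝓞 K) K) t x

theorem eval_mul {d : ℤ} {t : S} (ht : t ^ 3 = d) (x y : CubicCoord ℤ) :
    eval t (mul d x y) = eval t x * eval t y := by
  simp only [eval, mul, Matrix.cons_val, Int.cast_add, Int.cast_mul]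
  linear_combination (-(x 1 * y 2 + x 2 * y 1) - t * (x 2 * y 2) : S) * ht

theorem eval_cube {d : ℤ} {t : S} (ht : t ^ 3 = d) (x : CubicCoord ℤ) :
    eval t (cube d x) = eval t x ^ 3 := by
  rw [cube, eval_mul ht, eval_mul ht, pow_three]

theorem mul_smul (d c : R) (x y : CubicCoord R) : mul d x (c • y) = c • mul d x y := by
  ext i
  fin_cases i <;> simp only [mul, Pi.smul_apply, smul_eq_mul, Matrix.cons_val, Fin.reduceFinMk] <;>
    ring

theorem cube_smul (d c : R) (x : CubicCoord R) : cube d (c • x) = c ^ 3 • cube d x := by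
  ext i
  fin_cases i <;>
    simp only [cube, mul, Pi.smul_apply, smul_eq_mul, Matrix.cons_val, Fin.reduceFinMk] <;> ring

theorem map_comp_mul (f : R →+* S) (d : R) (x y : CubicCoord R) :
    f ∘ mul d x y = mul (f d) (f ∘ x) (f ∘ y) := by
  ext i
  fin_cases i <;> simp [mul]

theorem map_comp_cube (f : R →+* S) (d : R) (x : CubicCoord R) :
    f ∘ cube d x = cube (f d) (f ∘ x) := by
  simp only [cube, map_comp_mul]

end CommRing

end CubicCoord

theorem coe_algebraDiscr_int {K ι : Type*} [Field K] [NumberField K] [Fintype ι] [DecidableEq ι]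
    (v : ι → 𝓞 K) :
    (Algebra.discr ℤ v : ℚ) = Algebra.discr ℚ fun i => (v i : K) := by
  rw [Algebra.discr_def, Algebra.discr_def, ← eq_intCast (Int.castRingHom ℚ), RingHom.map_det]
  congr 1
  ext i j
  simp [Algebra.traceMatrix_apply, Algebra.traceForm_apply, Algebra.coe_trace_int]

/-- The ring of integers of the number field `K` contains a cube root `θ` of `d` which generates
`K`, and `d` is not a rational cube; that is, `K` is the pure cubic field `ℚ(∛d)`. -/
structure IsPureCubic {K : Type*} [Field K] [NumberField K] (d : ℤ) (θ : 𝓞 K) : Prop where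
  pow_three_eq : θ ^ 3 = d
  not_cube : ∀ b : ℚ, b ^ 3 ≠ d
  finrank_eq : finrank ℚ K = 3

namespace IsPureCubic

theorem exists_isPureCubic {d : ℤ} (hd : ∀ b : ℚ, b ^ 3 ≠ d) :
    ∃ (K : Type) (_ : Field K) (_ : NumberField K) (θ : 𝓞 K), IsPureCubic d θ := by
  let f : ℚ[X] := X ^ 3 - C (d : ℚ)
  have hf : Fact (Irreducible f) := ⟨(X_pow_sub_C_irreducible_iff_of_prime Nat.prime_three).2 hd⟩
  let B := AdjoinRoot.powerBasis hf.out.ne_zero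
  have hK : NumberField (AdjoinRoot f) :=
    { to_charZero := charZero_of_injective_algebraMap (algebraMap ℚ _).injective
      to_finiteDimensional := B.finite }
  have hroot : AdjoinRoot.root f ^ 3 = (d : AdjoinRoot f) := by
    have := AdjoinRoot.aeval_eq f ▸ AdjoinRoot.mk_self (f := f)
    simpa [f, sub_eq_zero] using this
  obtain ⟨θ, hθ⟩ : ∃ θ : 𝓞 (AdjoinRoot f), (θ : AdjoinRoot f) = AdjoinRoot.root f :=
    ⟨⟨_, .of_pow (n := 3) (by norm_num) (hroot ▸ isIntegral_algebraMap (x := d))⟩, rfl⟩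
  refine ⟨AdjoinRoot f, inferInstance, hK, θ, RingOfIntegers.ext (by simp [hθ, hroot]), hd, ?_⟩
  rw [B.finrank, AdjoinRoot.powerBasis_dim, natDegree_X_pow_sub_C]

variable {K : Type*} [Field K] [NumberField K] {d : ℤ} {θ : 𝓞 K}

section Basis

theorem ne_zero (h : IsPureCubic d θ) : d ≠ 0 := by
  rintro rfl
  exact h.not_cube 0 (by norm_num)

theorem coe_pow_three (h : IsPureCubic d θ) : (θ : K) ^ 3 = d := by
  simpa using congrArg (fun a : 𝓞 K => (a : K)) h.pow_three_eq

theorem minpoly_eq (h : IsPureCubic d θ) : minpoly ℚ (θ : K) = X ^ 3 - C (d : ℚ) :=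
  (minpoly.eq_of_irreducible_of_monic
    ((X_pow_sub_C_irreducible_iff_of_prime Nat.prime_three).2 h.not_cube)
    (by simp [h.coe_pow_three]) (monic_X_pow_sub_C _ three_ne_zero)).symm

theorem linearIndependent_pow (h : IsPureCubic d θ) :
    LinearIndependent ℚ fun i : Fin 3 => (θ : K) ^ (i : ℕ) := by
  have hdeg : (minpoly ℚ (θ : K)).natDegree = 3 := by rw [h.minpoly_eq, natDegree_X_pow_sub_C]
  have hpow := _root_.linearIndependent_pow (K := ℚ) (θ : K)
  rwa [hdeg] at hpow

/-- The power basis `1, θ, θ²` of `ℚ(∛d)`. -/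
noncomputable def powerBasis (h : IsPureCubic d θ) : PowerBasis ℚ K where
  gen := θ
  dim := 3
  basis := basisOfLinearIndependentOfCardEqFinrank h.linearIndependent_pow (by simp [h.finrank_eq])
  basis_eq_pow i := by simp

/-- The basis `1, θ, θ²` of `ℚ(∛d)`, indexed by `Fin 3`. -/
noncomputable def basis (h : IsPureCubic d θ) : Basis (Fin 3) ℚ K := h.powerBasis.basis

theorem basis_apply (h : IsPureCubic d θ) (i : Fin 3) : h.basis i = (θ : K) ^ (i : ℕ) :=
  h.powerBasis.basis_eq_pow i

theorem eval_eq_sum_basis (h : IsPureCubic d θ) (x : CubicCoord ℤ) :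
    x.eval (θ : K) = ∑ i, (x i : ℚ) • h.basis i := by
  simp [CubicCoord.eval, Fin.sum_univ_three, basis_apply, Algebra.smul_def]

theorem eval_injective (h : IsPureCubic d θ) : Function.Injective (CubicCoord.eval θ) := by
  intro x y hxy
  have hsum : ((x.eval θ : 𝓞 K) : K) = (y.eval θ : 𝓞 K) := congrArg _ hxy
  rw [CubicCoord.coe_eval, CubicCoord.coe_eval, h.eval_eq_sum_basis, h.eval_eq_sum_basis] at hsum
  have hrepr := congrArg (fun a => ⇑(h.basis.repr a)) hsum
  simp only [h.basis.repr_sum_self] at hrepr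
  exact funext fun i => Int.cast_injective (congrFun hrepr i)

theorem exists_intCast_mul_eq_eval (h : IsPureCubic d θ) (b : 𝓞 K) :
    ∃ (N : ℤ) (z : CubicCoord ℤ), N ≠ 0 ∧ N * b = z.eval θ := by
  obtain ⟨⟨N, hN⟩, hint⟩ := IsLocalization.exist_integer_multiples_of_finite
    (nonZeroDivisors ℤ) fun i => h.basis.repr b i
  choose z hz using hint
  refine ⟨N, z, nonZeroDivisors.ne_zero hN, RingOfIntegers.ext ?_⟩
  have hsum : (N * b : K) = ∑ i, (z i : ℚ) • h.basis i := by
    rw [← h.basis.sum_repr (b : K), Finset.mul_sum]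
    refine Finset.sum_congr rfl fun i _ => ?_
    rw [show (z i : ℚ) = N * h.basis.repr b i by simpa using hz i, mul_smul]
    simp [Algebra.smul_def]
  rw [CubicCoord.coe_eval, h.eval_eq_sum_basis, ← hsum]
  simp

theorem leftMulMatrix_eval (h : IsPureCubic d θ) (x : CubicCoord ℤ) :
    Algebra.leftMulMatrix h.basis (x.eval (θ : K)) =
      (!![x 0, d * x 2, d * x 1; x 1, x 0, d * x 2; x 2, x 1, x 0] : Matrix _ _ ℤ).map
        (Int.castRingHom ℚ) := by
  set A := (!![x 0, d * x 2, d * x 1; x 1, x 0, d * x 2; x 2, x 1, x 0] : Matrix _ _ ℤ) with hA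
  have hθ := h.coe_pow_three
  have hcol (j : Fin 3) : x.eval (θ : K) * h.basis j = ∑ i, (A i j : ℚ) • h.basis i := by
    simp only [CubicCoord.eval, Fin.sum_univ_three, basis_apply, Algebra.smul_def, map_intCast, hA]
    fin_cases j <;> simp only [Fin.reduceFinMk, Matrix.of_apply, Matrix.cons_val', Matrix.cons_val,
      Fin.coe_ofNat_eq_mod, Nat.reduceMod, Int.cast_mul]
    · ring
    · linear_combination (x 2 : K) * hθ
    · linear_combination (x 1 + x 2 * θ : K) * hθ
  ext i j
  rw [Algebra.leftMulMatrix_eq_repr_mul, hcol, h.basis.repr_sum_self]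
  simp

theorem rat_norm_eval (h : IsPureCubic d θ) (x : CubicCoord ℤ) :
    Algebra.norm ℚ (x.eval (θ : K)) = x.norm d := by
  rw [Algebra.norm_eq_matrix_det h.basis, h.leftMulMatrix_eval, ← RingHom.mapMatrix_apply,
    ← RingHom.map_det, Matrix.det_fin_three]
  simp only [CubicCoord.norm, Matrix.of_apply, Matrix.cons_val', Matrix.cons_val, eq_intCast]
  push_cast
  ring

theorem int_norm_eval (h : IsPureCubic d θ) (x : CubicCoord ℤ) :
    Algebra.norm ℤ (x.eval θ) = x.norm d := by
  have hnorm := h.rat_norm_eval x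
  rw [← CubicCoord.coe_eval, ← Algebra.coe_norm_int] at hnorm
  exact_mod_cast hnorm

theorem absNorm_span_eval (h : IsPureCubic d θ) (x : CubicCoord ℤ) :
    Ideal.absNorm (Ideal.span {x.eval θ}) = (x.norm d).natAbs := by
  rw [Ideal.absNorm_span_singleton, h.int_norm_eval]

end Basis

section Discriminant

theorem discr_basis (h : IsPureCubic d θ) : Algebra.discr ℚ h.basis = -27 * d ^ 2 := by
  have hderiv : aeval (θ : K) (derivative (minpoly ℚ (θ : K))) =
      CubicCoord.eval (θ : K) ![0, 0, 3] := by
    rw [h.minpoly_eq, CubicCoord.eval_vec]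
    norm_num
  have hnorm : CubicCoord.norm d ![0, 0, 3] = 27 * d ^ 2 := by
    simp only [CubicCoord.norm, Matrix.cons_val]
    ring
  have hdiscr := Algebra.discr_powerBasis_eq_norm ℚ h.powerBasis
  rw [show h.powerBasis.gen = (θ : K) from rfl, hderiv, h.rat_norm_eval, h.finrank_eq] at hdiscr
  rw [show Algebra.discr ℚ h.basis = Algebra.discr ℚ h.powerBasis.basis from rfl, hdiscr, hnorm]
  push_cast
  ring

/-- The integer `m` is the index of `ℤ[θ]` in `𝓞 K`. -/
theorem exists_sq_mul_discr_eq (h : IsPureCubic d θ) :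
    ∃ m : ℤ, m ≠ 0 ∧ m ^ 2 * discr K = -27 * d ^ 2 := by
  let B : Basis (Fin 3) ℤ (𝓞 K) := (RingOfIntegers.basis K).reindex (Fintype.equivOfCardEq (by
    rw [← finrank_eq_card_chooseBasisIndex, RingOfIntegers.rank, h.finrank_eq, Fintype.card_fin]))
  let v : Fin 3 → 𝓞 K := fun i => θ ^ (i : ℕ)
  have hv : Algebra.discr ℤ v = (B.toMatrix v).det ^ 2 * discr K := by
    rw [← discr_eq_discr K B, ← Algebra.discr_of_matrix_vecMul, B.toMatrix_map_vecMul]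
  have hv' : (Algebra.discr ℤ v : ℚ) = -27 * d ^ 2 := by
    rw [coe_algebraDiscr_int, ← h.discr_basis]
    congr 1
    ext i
    simp [v, basis_apply]
  have heq : (B.toMatrix v).det ^ 2 * discr K = -27 * d ^ 2 := by
    rw [← hv]
    exact_mod_cast hv'
  refine ⟨(B.toMatrix v).det, fun h0 => ?_, heq⟩
  simp [h0, h.ne_zero] at heq

theorem discr_neg (h : IsPureCubic d θ) : discr K < 0 := by
  obtain ⟨m, -, heq⟩ := h.exists_sq_mul_discr_eq
  have := pow_pos (abs_pos.2 h.ne_zero) 2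
  have := sq_abs d
  nlinarith [sq_nonneg m]

theorem abs_discr_le (h : IsPureCubic d θ) : |discr K| ≤ 27 * d ^ 2 := by
  obtain ⟨m, hm, heq⟩ := h.exists_sq_mul_discr_eq
  have hm2 : 1 ≤ m ^ 2 := Int.add_one_le_of_lt (sq_pos_of_ne_zero hm)
  rw [abs_of_neg h.discr_neg]
  nlinarith [h.discr_neg]

theorem nrRealPlaces_and_nrComplexPlaces (h : IsPureCubic d θ) :
    InfinitePlace.nrRealPlaces K = 1 ∧ InfinitePlace.nrComplexPlaces K = 1 := by
  have hcard := InfinitePlace.card_add_two_mul_card_eq_rank K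
  have hsign := sign_discr K
  rw [h.finrank_eq] at hcard
  rw [Int.sign_eq_neg_one_of_neg h.discr_neg] at hsign
  have : InfinitePlace.nrComplexPlaces K ≠ 0 := fun h0 => by simp [h0] at hsign
  omega

end Discriminant

end IsPureCubic

theorem exists_eq_mul_pow_three_of_ne_pow_three {G : Type*} [CommGroup G] {η ε : G}
    (hη : ∀ u : G, ∃ (k : ℤ) (v : G), u = η ^ k * v ^ 3) (hε : ∀ v : G, v ^ 3 ≠ ε) (u : G) :
    ∃ w ∈ ({1, ε, ε⁻¹} : Set G), ∃ v : G, u = w * v ^ 3 := by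
  obtain ⟨k, s, rfl⟩ := hη ε
  obtain ⟨l, t, rfl⟩ := hη u
  have hk : ¬ 3 ∣ k := by
    rintro ⟨m, rfl⟩
    refine hε (η ^ m * s) ?_
    rw [mul_pow, mul_comm 3, zpow_mul, zpow_ofNat]
  have hcube (j : ℤ) (hj : 3 ∣ l - j * k) :
      ∃ v, η ^ l * t ^ 3 = (η ^ k * s ^ 3) ^ j * v ^ 3 := by
    obtain ⟨m, hm⟩ := hj
    have hη : η ^ l = (η ^ k) ^ j * (η ^ m) ^ 3 := by
      rw [eq_add_of_sub_eq' hm, zpow_add, mul_comm j, mul_comm 3, zpow_mul, zpow_mul,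
        zpow_ofNat]
    have hs : (s ^ 3) ^ j = (s ^ j) ^ 3 := by rw [← zpow_natCast, zpow_comm, zpow_natCast]
    refine ⟨η ^ m * t * (s ^ j)⁻¹, ?_⟩
    rw [hη, mul_zpow, hs, mul_pow, mul_pow, inv_pow, mul_assoc _ ((s ^ j) ^ 3),
      mul_comm ((s ^ j) ^ 3), inv_mul_cancel_right, mul_assoc]
  have : 3 ∣ l - 0 * k ∨ 3 ∣ l - 1 * k ∨ 3 ∣ l - (-1) * k := by
    have : k % 3 = 1 ∨ k % 3 = 2 := by omega
    rcases this with h | h <;> omega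
  rcases this with h | h | h
  · exact ⟨1, by simp, by simpa using hcube _ h⟩
  · exact ⟨η ^ k * s ^ 3, by simp, by simpa using hcube _ h⟩
  · exact ⟨(η ^ k * s ^ 3)⁻¹, by simp, by simpa using hcube _ h⟩

section Ideals

variable {K : Type*} [Field K] [NumberField K]

theorem exists_ringHom_zmod_ker_eq {P : Ideal (𝓞 K)} {p : ℕ} (hp : p.Prime)
    (hP : P.absNorm = p) : ∃ f : 𝓞 K →+* ZMod p, RingHom.ker f = P := by
  have : Finite (𝓞 K ⧸ P) := P.absNorm_ne_zero_iff.1 (hP ▸ hp.ne_zero)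
  have := Fintype.ofFinite (𝓞 K ⧸ P)
  have hcard : Fintype.card (𝓞 K ⧸ P) = p := by rw [← hP, ← Nat.card_eq_fintype_card]; rfl
  refine ⟨(ZMod.ringEquivOfPrime _ hp hcard).symm.toRingHom.comp (Ideal.Quotient.mk P), ?_⟩
  ext a
  simp [RingHom.mem_ker, Ideal.Quotient.eq_zero_iff_mem]

theorem eq_span_singleton_of_absNorm_eq {P : Ideal (𝓞 K)} {a : 𝓞 K} (ha : a ∈ P)
    (hP0 : P.absNorm ≠ 0) (hP : P.absNorm = (Ideal.span {a}).absNorm) : P = Ideal.span {a} := by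
  obtain ⟨Q, hQ⟩ := Ideal.dvd_iff_le.2 ((Ideal.span_singleton_le_iff_mem P).2 ha)
  rw [hQ, map_mul] at hP
  have hQ1 : Q = ⊤ := Ideal.absNorm_eq_one_iff.1 (mul_left_cancel₀ hP0 (by rw [← hP, mul_one]))
  rw [hQ, hQ1, Ideal.mul_top]

end Ideals

namespace IsPureCubic

variable {K : Type*} [Field K] [NumberField K] {d : ℤ} {θ : 𝓞 K}

section Units

theorem exists_unit_forall_eq_zpow_mul_pow_three (h : IsPureCubic d θ) :
    ∃ η : (𝓞 K)ˣ, ∀ u, ∃ (k : ℤ) (v : (𝓞 K)ˣ), u = η ^ k * v ^ 3 := by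
  have hrank : Units.rank K = 1 := by
    rw [Units.rank, InfinitePlace.card_eq_nrRealPlaces_add_nrComplexPlaces,
      h.nrRealPlaces_and_nrComplexPlaces.1, h.nrRealPlaces_and_nrComplexPlaces.2]
  have : Unique (Fin (Units.rank K)) := hrank ▸ inferInstance
  refine ⟨Units.fundSystem K default, fun u => ?_⟩
  obtain ⟨⟨s, e⟩, hu, -⟩ := Units.exist_unique_eq_mul_prod K u
  refine ⟨e default, s, ?_⟩
  rw [hu, Fintype.prod_unique, mul_comm]
  rcases Units.torsion_eq_one_or_neg_one_of_odd_finrank (by rw [h.finrank_eq]; decide) s with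
    hs | hs <;> simp [hs, pow_succ]

/-- A degree-one prime `P` of norm `p` containing `x.eval θ` has residue map `θ ↦ r`, and `ε` is
not a cube as soon as it is not one modulo `P`. -/
theorem pow_three_ne_eval (h : IsPureCubic d θ) {p : ℕ} (hp : p.Prime) {x : CubicCoord ℤ}
    (hx : (x.norm d).natAbs = p) {ε : CubicCoord ℤ}
    (hε : ∀ r t : ZMod p, r ^ 3 = d → x.eval r = 0 → t ^ 3 ≠ ε.eval r) (b : 𝓞 K) :
    b ^ 3 ≠ ε.eval θ := by
  intro hb
  obtain ⟨f, hf⟩ := exists_ringHom_zmod_ker_eq hp ((h.absNorm_span_eval x).trans hx)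
  refine hε (f θ) (f b) ?_ ?_ ?_
  · rw [← map_pow, h.pow_three_eq, map_intCast]
  · rw [← CubicCoord.map_eval, ← RingHom.mem_ker, hf]
    exact Ideal.mem_span_singleton_self _
  · rw [← CubicCoord.map_eval, ← map_pow, hb]

end Units

section ClassNumber

theorem minkowskiBound_le (h : IsPureCubic d θ) :
    (4 / Real.pi) ^ InfinitePlace.nrComplexPlaces K *
      ((finrank ℚ K).factorial / (finrank ℚ K : ℝ) ^ finrank ℚ K * √|(discr K : ℝ)|) ≤
      37 / 25 * |(d : ℝ)| := by
  have hdiscr : √|(discr K : ℝ)| ≤ 26 / 5 * |(d : ℝ)| := by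
    have : |(discr K : ℝ)| ≤ 27 * d ^ 2 := by exact_mod_cast h.abs_discr_le
    rw [Real.sqrt_le_left (by positivity), mul_pow, sq_abs]
    nlinarith [sq_nonneg (d : ℝ)]
  have hpi : 4 / Real.pi ≤ 4 / 3.14 := by
    gcongr
    exact Real.pi_gt_d2.le
  rw [h.nrRealPlaces_and_nrComplexPlaces.2, h.finrank_eq, pow_one]
  calc 4 / Real.pi * ((Nat.factorial 3 : ℕ) / ((3 : ℕ) : ℝ) ^ 3 * √|(discr K : ℝ)|)
      ≤ 4 / 3.14 * ((Nat.factorial 3 : ℕ) / ((3 : ℕ) : ℝ) ^ 3 * (26 / 5 * |(d : ℝ)|)) := by gcongr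
    _ ≤ 37 / 25 * |(d : ℝ)| := by
      norm_num [Nat.factorial]
      nlinarith [abs_nonneg (d : ℝ)]

theorem isPrincipalIdealRing_of_forall_prime (h : IsPureCubic d θ) {M : ℕ}
    (hM : 37 * |d| < 25 * (M + 1))
    (hprincipal : ∀ p ≤ M, p.Prime → ∀ P : Ideal (𝓞 K), P.IsMaximal → (p : 𝓞 K) ∈ P →
      P.absNorm ≤ M → Submodule.IsPrincipal P) :
    IsPrincipalIdealRing (𝓞 K) := by
  refine RingOfIntegers.isPrincipalIdealRing_of_isPrincipal_of_norm_le_of_isPrime fun P hP hle => ?_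
  have hmax : (P : Ideal (𝓞 K)).IsMaximal := hP.isMaximal (nonZeroDivisors.coe_ne_zero P)
  have hnorm : (P : Ideal (𝓞 K)).absNorm ≤ M := by
    have hM' : (37 : ℝ) * |(d : ℝ)| < 25 * (M + 1) := by exact_mod_cast hM
    have := hle.trans h.minkowskiBound_le
    rw [← Nat.lt_add_one_iff, ← Nat.cast_lt (α := ℝ)]
    push_cast
    linarith
  obtain ⟨p, n, hn, hpP, hp, hPn⟩ := Ideal.exists_prime_and_absNorm_eq_pow (P : Ideal (𝓞 K))
  have hpn : p ≤ p ^ n := Nat.le_self_pow hn.ne' p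
  exact hprincipal p (by omega) hp _ hmax hpP hnorm

theorem absNorm_dvd_norm_of_eval_mem (h : IsPureCubic d θ) {P : Ideal (𝓞 K)} {x : CubicCoord ℤ}
    (hx : x.eval θ ∈ P) : P.absNorm ∣ (x.norm d).natAbs := by
  rw [← h.absNorm_span_eval]
  exact Ideal.absNorm_dvd_absNorm_of_le ((Ideal.span_singleton_le_iff_mem P).2 hx)

theorem exists_root_of_absNorm_eq_prime (h : IsPureCubic d θ) {P : Ideal (𝓞 K)} {p : ℕ}
    (hp : p.Prime) (hP : P.absNorm = p) :
    ∃ r : ZMod p, r ^ 3 = d ∧ ∀ x : CubicCoord ℤ, x.eval θ ∈ P ↔ x.eval r = 0 := by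
  obtain ⟨f, rfl⟩ := exists_ringHom_zmod_ker_eq hp hP
  refine ⟨f θ, ?_, fun x => ?_⟩
  · rw [← map_pow, h.pow_three_eq, map_intCast]
  · rw [← CubicCoord.map_eval, RingHom.mem_ker]

theorem isPrincipal_of_absNorm_eq_norm (h : IsPureCubic d θ) {P : Ideal (𝓞 K)} (hP : P.IsMaximal)
    {x : CubicCoord ℤ} (hx : x.eval θ ∈ P) (hnorm : P.absNorm = (x.norm d).natAbs) :
    Submodule.IsPrincipal P := by
  have hP0 : P.absNorm ≠ 0 :=
    Ideal.absNorm_eq_zero_iff.not.2 (Ideal.IsMaximal.ne_bot_of_isIntegral_int P)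
  exact ⟨_, eq_span_singleton_of_absNorm_eq hx hP0 (hnorm.trans (h.absNorm_span_eval x).symm)⟩

theorem isPrincipal_of_norm_prime (h : IsPureCubic d θ) {P : Ideal (𝓞 K)} (hP : P.IsMaximal)
    {x : CubicCoord ℤ} (hx : x.eval θ ∈ P) (hnorm : (x.norm d).natAbs.Prime) :
    Submodule.IsPrincipal P :=
  h.isPrincipal_of_absNorm_eq_norm hP hx <| (hnorm.eq_one_or_self_of_dvd _
    (h.absNorm_dvd_norm_of_eval_mem hx)).resolve_left (Ideal.absNorm_eq_one_iff.not.2 hP.ne_top)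

theorem isPrincipal_of_norm_eq_sq (h : IsPureCubic d θ) {P : Ideal (𝓞 K)} (hP : P.IsMaximal)
    {x : CubicCoord ℤ} (hx : x.eval θ ∈ P) {p : ℕ} (hp : p.Prime)
    (hnorm : (x.norm d).natAbs = p ^ 2) (hroot : ∀ r : ZMod p, r ^ 3 = d → x.eval r ≠ 0) :
    Submodule.IsPrincipal P := by
  obtain ⟨k, hk, hPk⟩ := (Nat.dvd_prime_pow hp).1 (hnorm ▸ h.absNorm_dvd_norm_of_eval_mem hx)
  have hk0 : k ≠ 0 := by
    rintro rfl
    exact hP.ne_top (Ideal.absNorm_eq_one_iff.1 hPk)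
  have hk1 : k ≠ 1 := by
    rintro rfl
    obtain ⟨r, hr, hmem⟩ := h.exists_root_of_absNorm_eq_prime hp (hPk.trans (pow_one p))
    exact hroot r hr ((hmem x).1 hx)
  exact h.isPrincipal_of_absNorm_eq_norm hP hx (by rw [hPk, hnorm, show k = 2 by omega])

/-- Below `p ^ 2` only the degree-one primes over `p` occur; these correspond to the cube roots `r`
of `d` modulo `p`, each of which has to be accounted for by a generator in `l`. -/
theorem isPrincipal_of_absNorm_lt_sq (h : IsPureCubic d θ) {P : Ideal (𝓞 K)} (hP : P.IsMaximal)
    {p : ℕ} (hp : p.Prime) (hpP : (p : 𝓞 K) ∈ P) (hlt : P.absNorm < p ^ 2)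
    (l : List (CubicCoord ℤ))
    (hl : ∀ r : ZMod p, r ^ 3 = d → ∃ x ∈ l, (x.norm d).natAbs = p ∧ x.eval r = 0) :
    Submodule.IsPrincipal P := by
  have hdvd : P.absNorm ∣ p ^ 3 := by
    have := Ideal.absNorm_dvd_absNorm_of_le ((Ideal.span_singleton_le_iff_mem P).2 hpP)
    rwa [Ideal.absNorm_span_natCast, RingOfIntegers.rank, h.finrank_eq] at this
  obtain ⟨k, -, hPk⟩ := (Nat.dvd_prime_pow hp).1 hdvd
  have hk0 : k ≠ 0 := by
    rintro rfl
    exact hP.ne_top (Ideal.absNorm_eq_one_iff.1 hPk)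
  have hk2 : k < 2 := (Nat.pow_lt_pow_iff_right hp.one_lt).1 (hPk ▸ hlt)
  have hPp : P.absNorm = p := by rw [hPk, show k = 1 by omega, pow_one]
  obtain ⟨r, hr, hmem⟩ := h.exists_root_of_absNorm_eq_prime hp hPp
  obtain ⟨x, -, hx, hxr⟩ := hl r hr
  exact h.isPrincipal_of_absNorm_eq_norm hP ((hmem x).2 hxr) (hPp.trans hx.symm)

theorem eval_mem_of_natCast_mem (h : IsPureCubic d θ) {P : Ideal (𝓞 K)} (hP : P.IsPrime)
    {p : ℕ} (hp : (p : 𝓞 K) ∈ P) {x y : CubicCoord ℤ}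
    (hxy : CubicCoord.mul d x y = ![(p : ℤ), 0, 0]) :
    x.eval θ ∈ P ∨ y.eval θ ∈ P := by
  apply hP.mem_or_mem
  rw [← CubicCoord.eval_mul h.pow_three_eq, hxy]
  simpa [CubicCoord.eval] using hp

theorem isPrincipalIdealRing_two (h : IsPureCubic 2 θ) :
    IsPrincipalIdealRing (𝓞 K) := by
  refine h.isPrincipalIdealRing_of_forall_prime (M := 2) (by norm_num)
    fun p hpM hp P hP hpP hM => ?_
  interval_cases p <;> try exact absurd hp (by decide)
  exact h.isPrincipal_of_absNorm_lt_sq hP hp hpP (by omega) [![0, 1, 0]] (by decide)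

theorem isPrincipalIdealRing_three (h : IsPureCubic 3 θ) :
    IsPrincipalIdealRing (𝓞 K) := by
  refine h.isPrincipalIdealRing_of_forall_prime (M := 4) (by norm_num)
    fun p hpM hp P hP hpP hM => ?_
  interval_cases p <;> try exact absurd hp (by decide)
  · rcases h.eval_mem_of_natCast_mem hP.isPrime hpP (x := ![-1, 1, 0]) (y := ![1, 1, 1])
      (by decide) with hx | hy
    · exact h.isPrincipal_of_norm_prime hP hx (by decide)
    · exact h.isPrincipal_of_norm_eq_sq hP hy hp (by decide) (by decide)
  · exact h.isPrincipal_of_absNorm_lt_sq hP hp hpP (by omega) [![0, 1, 0]] (by decide)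

theorem isPrincipalIdealRing_five (h : IsPureCubic 5 θ) :
    IsPrincipalIdealRing (𝓞 K) := by
  refine h.isPrincipalIdealRing_of_forall_prime (M := 7) (by norm_num)
    fun p hpM hp P hP hpP hM => ?_
  interval_cases p <;> try exact absurd hp (by decide)
  · rcases h.eval_mem_of_natCast_mem hP.isPrime hpP (x := ![3, 0, -1]) (y := ![9, 5, 3])
      (by decide) with hx | hy
    · exact h.isPrincipal_of_norm_prime hP hx (by decide)
    · exact h.isPrincipal_of_norm_eq_sq hP hy hp (by decide) (by decide)
  · exact h.isPrincipal_of_absNorm_lt_sq hP hp hpP (by omega) [![2, -1, 0]] (by decide)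
  · exact h.isPrincipal_of_absNorm_lt_sq hP hp hpP (by omega) [![0, 1, 0]] (by decide)
  · exact h.isPrincipal_of_absNorm_lt_sq hP hp hpP (by omega) [] (by decide)

theorem isPrincipalIdealRing_six (h : IsPureCubic 6 θ) :
    IsPrincipalIdealRing (𝓞 K) := by
  refine h.isPrincipalIdealRing_of_forall_prime (M := 8) (by norm_num)
    fun p hpM hp P hP hpP hM => ?_
  interval_cases p <;> try exact absurd hp (by decide)
  · have : CubicCoord.eval θ ![2, -1, 0] ∈ P := by
      have hθ : θ ∈ P := by
        refine hP.isPrime.mem_of_pow_mem 3 ?_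
        rw [h.pow_three_eq, show ((6 : ℤ) : 𝓞 K) = 3 * (2 : ℕ) by norm_num]
        exact P.mul_mem_left 3 hpP
      simpa [CubicCoord.eval, sub_eq_add_neg] using P.sub_mem hpP hθ
    exact h.isPrincipal_of_norm_prime hP this (by decide)
  · exact h.isPrincipal_of_absNorm_lt_sq hP hp hpP (by omega) [![3, 2, 1]] (by decide)
  · exact h.isPrincipal_of_absNorm_lt_sq hP hp hpP (by omega) [![-1, 1, 0]] (by decide)
  · exact h.isPrincipal_of_absNorm_lt_sq hP hp hpP (by omega)
      [![1, 1, 0], ![7, -2, -1], ![5, -1, -1]] (by decide)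
end ClassNumber

end IsPureCubic

namespace CubicCoord

section Obstruction

/-- The coefficient of `t²` in `γ z³ ∈ R[t] / (t³ - d)`, as a cubic form in the coordinates
of `z`. -/
def cubicForm {R : Type*} [CommRing R] (d : R) (γ z : CubicCoord R) : R :=
  mul d γ (cube d z) 2

/-- A local obstruction at some `p` to the vanishing of the coefficient of `t²` in `γ b³`, for
`b` in `ℚ[t] / (t³ - d)`: the integral zeros of this form are all divisible by `p`, so that it has
no nontrivial zero. -/
def IsObstructed (d : ℤ) (γ : CubicCoord ℤ) : Prop :=
  ∃ p : ℕ, 1 < p ∧ ∀ z : CubicCoord ℤ, cubicForm d γ z = 0 → ∀ j, (p : ℤ) ∣ z j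

variable {d : ℤ} {γ : CubicCoord ℤ}

theorem cubicForm_smul (c : ℤ) (z : CubicCoord ℤ) :
    cubicForm d γ (c • z) = c ^ 3 * cubicForm d γ z := by
  simp only [cubicForm, cube_smul, mul_smul, Pi.smul_apply, smul_eq_mul]

theorem map_cubicForm {R S : Type*} [CommRing R] [CommRing S] (f : R →+* S) (d : R)
    (γ z : CubicCoord R) : f (cubicForm d γ z) = cubicForm (f d) (f ∘ γ) (f ∘ z) := by
  rw [cubicForm, ← Function.comp_apply (f := f), map_comp_mul, map_comp_cube, cubicForm]

theorem dvd_cubicForm_iff {n : ℕ} {z z' : CubicCoord ℤ} (h : ∀ j, z j ≡ z' j [ZMOD n]) :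
    (n : ℤ) ∣ cubicForm d γ z ↔ (n : ℤ) ∣ cubicForm d γ z' := by
  have hcast : Int.castRingHom (ZMod n) ∘ z = Int.castRingHom (ZMod n) ∘ z' :=
    funext fun j => (ZMod.intCast_eq_intCast_iff _ _ _).2 (h j)
  rw [← ZMod.intCast_zmod_eq_zero_iff_dvd, ← ZMod.intCast_zmod_eq_zero_iff_dvd,
    ← eq_intCast (Int.castRingHom _), ← eq_intCast (Int.castRingHom _), map_cubicForm,
    map_cubicForm, hcast]

/-- Modulo `p * k`, only the lifts of nontrivial zeros modulo `p` have to be inspected. -/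
theorem isObstructed_of_forall_lt (p k : ℕ) (hp : 1 < p) (hk : k ≠ 0)
    (h : ∀ a b c : Fin p, (a + b + c : ℕ) ≠ 0 → (p : ℤ) ∣ cubicForm d γ ![a, b, c] →
      ∀ u v w : Fin k, ¬ (p * k : ℤ) ∣ cubicForm d γ ![a + p * u, b + p * v, c + p * w]) :
    IsObstructed d γ := by
  refine ⟨p, hp, fun z hz => ?_⟩
  have hp0 : (0 : ℤ) < p := by omega
  have hk0 : (0 : ℤ) < k := by omega
  choose a ha using fun j => Int.eq_ofNat_of_zero_le (Int.emod_nonneg (z j) hp0.ne')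
  choose u hu using fun j => Int.eq_ofNat_of_zero_le (Int.emod_nonneg (z j / p) hk0.ne')
  have ha_lt (j) : a j < p := by exact_mod_cast ha j ▸ Int.emod_lt_of_pos (z j) hp0
  have hu_lt (j) : u j < k := by exact_mod_cast hu j ▸ Int.emod_lt_of_pos (z j / p) hk0
  have hmod_p (j) : z j ≡ a j [ZMOD p] := ha j ▸ (Int.mod_modEq _ _).symm
  have hmod_pk (j) : z j ≡ a j + p * u j [ZMOD (p * k : ℕ)] := by
    rw [← ha, ← hu, Nat.cast_mul]
    calc z j = z j % p + p * (z j / p) := (Int.emod_add_mul_ediv _ _).symm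
      _ ≡ z j % p + p * (z j / p % k) [ZMOD p * k] :=
        ((Int.mod_modEq _ _).symm.mul_left').add_left _
  by_contra hne
  have hsum : a 0 + a 1 + a 2 ≠ 0 := fun h0 => hne fun j => by
    have h0j : a j = 0 := by fin_cases j <;> simp <;> omega
    exact Int.dvd_of_emod_eq_zero (by simp [ha, h0j])
  have hzero_p : (p : ℤ) ∣ cubicForm d γ ![a 0, a 1, a 2] :=
    (dvd_cubicForm_iff fun j => by fin_cases j <;> exact hmod_p _).1 (hz ▸ dvd_zero _)
  refine h ⟨_, ha_lt 0⟩ ⟨_, ha_lt 1⟩ ⟨_, ha_lt 2⟩ hsum hzero_p ⟨_, hu_lt 0⟩ ⟨_, hu_lt 1⟩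
    ⟨_, hu_lt 2⟩ ?_
  rw [← Nat.cast_mul]
  exact (dvd_cubicForm_iff fun j => by fin_cases j <;> exact hmod_pk _).1 (hz ▸ dvd_zero _)

theorem isObstructed_of_three_dvd (h3 : 3 ∣ d) (h9 : ¬ 9 ∣ d) (hγ : ¬ 3 ∣ γ 2) :
    IsObstructed d γ := by
  obtain ⟨k, rfl⟩ := h3
  have hk : ¬ 3 ∣ k := fun h => h9 (by simpa using mul_dvd_mul_left 3 h)
  have dvd_of_dvd {c n : ℤ} (hc : ¬ 3 ∣ c) (h : 3 ∣ c * n ^ 3) : 3 ∣ n :=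
    Int.prime_three.dvd_of_dvd_pow ((Int.prime_three.dvd_or_dvd h).resolve_left hc)
  have hγk : ¬ 3 ∣ γ 2 * k := Int.prime_three.not_dvd_mul hγ hk
  refine ⟨3, by decide, fun z hz => ?_⟩
  simp only [cubicForm, cube, mul, Matrix.cons_val] at hz
  generalize γ 0 = g₀, γ 1 = g₁, γ 2 = g₂ at hγ hγk hz
  obtain ⟨a, ha⟩ : 3 ∣ z 0 := dvd_of_dvd hγ
    ⟨-(g₀ * (z 0 ^ 2 * z 2 + z 0 * z 1 ^ 2 + 3 * k * z 1 * z 2 ^ 2)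
      + g₁ * (z 0 ^ 2 * z 1 + 3 * k * (z 0 * z 2 ^ 2 + z 1 ^ 2 * z 2))
      + g₂ * (k * z 1 ^ 3 + 3 * k ^ 2 * z 2 ^ 3 + 6 * k * z 0 * z 1 * z 2)),
      by linear_combination hz⟩
  rw [ha] at hz
  obtain ⟨b, hb⟩ : 3 ∣ z 1 := dvd_of_dvd hγk
    ⟨-(g₀ * (3 * a ^ 2 * z 2 + a * z 1 ^ 2 + k * z 1 * z 2 ^ 2)
      + g₁ * (3 * a ^ 2 * z 1 + k * (3 * a * z 2 ^ 2 + z 1 ^ 2 * z 2))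
      + g₂ * (3 * a ^ 3 + k ^ 2 * z 2 ^ 3 + 6 * k * a * z 1 * z 2)), by linarith⟩
  rw [hb] at hz
  obtain ⟨c, hc⟩ : 3 ∣ z 2 := dvd_of_dvd (Int.prime_three.not_dvd_mul hγk hk)
    ⟨-(g₀ * (a ^ 2 * z 2 + 3 * a * b ^ 2 + k * b * z 2 ^ 2)
      + g₁ * (3 * a ^ 2 * b + k * (a * z 2 ^ 2 + 3 * b ^ 2 * z 2))
      + g₂ * (a ^ 3 + 3 * k * b ^ 3 + 6 * k * a * b * z 2)), by linarith⟩
  intro j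
  fin_cases j
  exacts [⟨a, ha⟩, ⟨b, hb⟩, ⟨c, hc⟩]

theorem IsObstructed.eq_zero (h : IsObstructed d γ) {z : CubicCoord ℤ}
    (hz : cubicForm d γ z = 0) : z = 0 := by
  obtain ⟨p, hp, hdvd⟩ := h
  have hpow (n : ℕ) : ∀ j, (p : ℤ) ^ n ∣ z j := by
    induction n with
    | zero => simp
    | succ n ih =>
      choose w hw using ih
      obtain rfl : z = (p : ℤ) ^ n • w := funext hw
      rw [cubicForm_smul] at hz
      have hw0 : cubicForm d γ w = 0 := (mul_eq_zero.1 hz).resolve_left (by positivity)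
      exact fun j => by simpa [pow_succ] using mul_dvd_mul_left _ (hdvd w hw0 j)
  ext j
  by_contra hj
  obtain ⟨n, hn⟩ := (Int.finiteMultiplicity_iff (a := p)).2 ⟨by simpa using hp.ne', hj⟩
  exact hn (hpow _ j)

end Obstruction

end CubicCoord

theorem IsPureCubic.eq_zero_of_isObstructed {K : Type*} [Field K] [NumberField K] {d : ℤ}
    {θ : 𝓞 K} (h : IsPureCubic d θ) {γ x : CubicCoord ℤ} (hγ : γ.IsObstructed d) {b : 𝓞 K}
    (hb : x.eval θ = γ.eval θ * b ^ 3) (hx : x 2 = 0) : x = 0 := by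
  obtain ⟨N, z, hN, hz⟩ := h.exists_intCast_mul_eq_eval b
  have hcube : N ^ 3 • x = CubicCoord.mul d γ (CubicCoord.cube d z) := h.eval_injective <| by
    rw [CubicCoord.eval_smul, CubicCoord.eval_mul h.pow_three_eq,
      CubicCoord.eval_cube h.pow_three_eq, ← hz, hb]
    push_cast
    ring
  have hz0 : z = 0 := hγ.eq_zero <| by
    rw [CubicCoord.cubicForm, ← hcube, Pi.smul_apply, hx, smul_zero]
  have hNx : N ^ 3 • x = 0 := by
    rw [hcube, hz0]
    ext j
    fin_cases j <;> simp [CubicCoord.cube, CubicCoord.mul]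
  exact (smul_eq_zero.1 hNx).resolve_left (pow_ne_zero _ hN)

theorem dvd_three_mul_sq_of_dvd_add_of_dvd {R : Type*} [CommRing R] {x y φ c : R}
    (hxy : IsCoprime x y) (hc₁ : c ∣ x + φ * y)
    (hc₂ : c ∣ x ^ 2 - x * (φ * y) + (φ * y) ^ 2) : c ∣ (3 * φ) ^ 2 := by
  have hcx : c ∣ 3 * φ ^ 2 * x ^ 2 := by
    rw [show 3 * φ ^ 2 * x ^ 2 = (x ^ 2 - x * (φ * y) + (φ * y) ^ 2) * φ ^ 2
      + (x + φ * y) * (φ ^ 2 * (2 * x - φ * y)) by ring]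
    exact dvd_add (hc₂.mul_right _) (hc₁.mul_right _)
  have hcy : c ∣ 3 * φ ^ 2 * y ^ 2 := by
    rw [show 3 * φ ^ 2 * y ^ 2 = (x ^ 2 - x * (φ * y) + (φ * y) ^ 2)
      + (x + φ * y) * (2 * (φ * y) - x) by ring]
    exact dvd_add hc₂ (hc₁.mul_right _)
  obtain ⟨a, b, hab⟩ := hxy.pow (m := 2) (n := 2)
  rw [show (3 * φ) ^ 2 = 3 * (a * (3 * φ ^ 2 * x ^ 2) + b * (3 * φ ^ 2 * y ^ 2)) by
    linear_combination -9 * φ ^ 2 * hab]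
  exact (dvd_add (hcx.mul_left a) (hcy.mul_left b)).mul_left 3

theorem exists_associated_mul_pow_three {R : Type*} [CommRing R] [IsDomain R]
    [IsPrincipalIdealRing R] {x y z φ m r α β : R} (hxy : IsCoprime x y)
    (hz : IsCoprime z (3 * φ)) (hm : m ≠ 0) (heq : x ^ 3 + (φ * y) ^ 3 = m * z ^ 3)
    (hr : m ∣ x - r * y) (hαβ : α * β = m) (hα : α ∣ r + φ) (hβ : β ∣ r ^ 2 - r * φ + φ ^ 2) :
    ∃ b, Associated (α * b ^ 3) (x + φ * y) := by
  obtain ⟨k, hk⟩ := hr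
  have hxk : x = r * y + α * β * k := by linear_combination hk - k * hαβ
  obtain ⟨s, hs⟩ : α ∣ x + φ * y := by
    rw [show x + φ * y = (r + φ) * y + α * (β * k) by rw [hxk]; ring]
    exact dvd_add (hα.mul_right y) (dvd_mul_right _ _)
  obtain ⟨t, ht⟩ : β ∣ x ^ 2 - x * (φ * y) + (φ * y) ^ 2 := by
    rw [show x ^ 2 - x * (φ * y) + (φ * y) ^ 2 = (r ^ 2 - r * φ + φ ^ 2) * y ^ 2
      + β * (α * k * (2 * r * y + α * β * k - φ * y)) by rw [hxk]; ring]
    exact dvd_add (hβ.mul_right _) (dvd_mul_right _ _)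
  have hst : s * t = z ^ 3 := mul_left_cancel₀ hm <| by
    linear_combination heq - s * t * hαβ - (x ^ 2 - x * (φ * y) + (φ * y) ^ 2) * hs - α * s * ht
  have hrel : IsRelPrime s t := fun c hcs hct =>
    (hz.pow (m := 3) (n := 2)).isUnit_of_dvd' (hst ▸ hcs.mul_right t) <|
      dvd_three_mul_sq_of_dvd_add_of_dvd hxy (hs ▸ hcs.mul_left α) (ht ▸ hct.mul_left β)
  obtain ⟨b, hb⟩ := exists_associated_pow_of_mul_eq_pow' hrel.isCoprime hst
  exact ⟨b, hs ▸ hb.mul_left α⟩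

namespace IsPureCubic

variable {K : Type*} [Field K] [NumberField K] {d : ℤ} {θ : 𝓞 K}

theorem exists_eval_mul_pow_three_eq (h : IsPureCubic d θ) {α ε ε' : CubicCoord ℤ}
    (hεε' : CubicCoord.mul d ε ε' = ![1, 0, 0]) (hε : ∀ b : 𝓞 K, b ^ 3 ≠ ε.eval θ) {a b : 𝓞 K}
    (hab : Associated (α.eval θ * b ^ 3) a) :
    ∃ γ, (γ = α ∨ γ = CubicCoord.mul d ε α ∨ γ = CubicCoord.mul d ε' α) ∧
      ∃ c : 𝓞 K, a = γ.eval θ * c ^ 3 := by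
  obtain ⟨u, rfl⟩ := hab
  have hmul : ε.eval θ * ε'.eval θ = 1 := by
    rw [← CubicCoord.eval_mul h.pow_three_eq, hεε', CubicCoord.eval_vec]
    push_cast
    ring
  obtain ⟨η, hη⟩ := h.exists_unit_forall_eq_zpow_mul_pow_three
  obtain ⟨w, hw, v, rfl⟩ := exists_eq_mul_pow_three_of_ne_pow_three hη
    (ε := Units.mkOfMulEqOne _ _ hmul)
    (fun v hv => hε v (by rw [← Units.val_pow_eq_pow_val, hv, Units.val_mkOfMulEqOne])) u
  have hinv : (((Units.mkOfMulEqOne _ _ hmul)⁻¹ : (𝓞 K)ˣ) : 𝓞 K) = ε'.eval θ :=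
    Units.inv_eq_of_mul_eq_one_right hmul
  have hbv (e : 𝓞 K) : α.eval θ * b ^ 3 * (e * v ^ 3) = e * α.eval θ * (b * v) ^ 3 := by ring
  have heval (e : CubicCoord ℤ) : (CubicCoord.mul d e α).eval θ = e.eval θ * α.eval θ :=
    CubicCoord.eval_mul h.pow_three_eq _ _
  rcases hw with rfl | rfl | rfl
  · exact ⟨α, .inl rfl, b * v, by simp [mul_pow, mul_assoc]⟩
  · exact ⟨_, .inr (.inl rfl), b * v, by simp [heval, hbv]⟩
  · exact ⟨_, .inr (.inr rfl), b * v, by simp [heval, hbv, hinv]⟩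

/-- Here `α` has norm `± m` and divides both `m` and `r + θ`, so that `x ≡ r y` modulo `m` makes
`x + y θ` equal to `α` times a unit times a cube. The unit `ε` with inverse `ε'` then leaves three
candidates for its class modulo cubes, each of which is excluded locally. -/
theorem pow_three_add_ne [IsPrincipalIdealRing (𝓞 K)] (h : IsPureCubic d θ) {m r : ℤ}
    {α β α' β' ε ε' : CubicCoord ℤ} (hm : m ≠ 0) (hαβ : CubicCoord.mul d α β = ![m, 0, 0])
    (hα : CubicCoord.mul d α α' = ![r, 1, 0]) (hβ : CubicCoord.mul d β β' = ![r ^ 2, -r, 1])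
    (hεε' : CubicCoord.mul d ε ε' = ![1, 0, 0]) (hε : ∀ b : 𝓞 K, b ^ 3 ≠ ε.eval θ)
    (hobs : α.IsObstructed d ∧ (CubicCoord.mul d ε α).IsObstructed d ∧
      (CubicCoord.mul d ε' α).IsObstructed d)
    {x y z : ℤ} (hxy : IsCoprime x y) (hz : IsCoprime z (3 * d)) (hr : m ∣ x - r * y) :
    x ^ 3 + d * y ^ 3 ≠ m * z ^ 3 := by
  intro heq
  have hmul {s t : CubicCoord ℤ} {c : CubicCoord ℤ} (hst : CubicCoord.mul d s t = c) :
      s.eval θ * t.eval θ = c.eval θ := by rw [← CubicCoord.eval_mul h.pow_three_eq, hst]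
  have hzθ : IsCoprime (z : 𝓞 K) (3 * θ) := by
    refine IsCoprime.of_isCoprime_of_dvd_right (y := 3 * (d : 𝓞 K)) (by exact_mod_cast hz.intCast)
      ?_
    exact mul_dvd_mul_left 3 (h.pow_three_eq ▸ dvd_pow_self θ three_ne_zero)
  obtain ⟨b, hb⟩ := exists_associated_mul_pow_three (x := (x : 𝓞 K)) (y := y) (φ := θ) (m := m)
    (r := r) (α := α.eval θ) (β := β.eval θ) hxy.intCast hzθ (by exact_mod_cast hm)
    (by rw [mul_pow, h.pow_three_eq]; exact_mod_cast congrArg (Int.cast (R := 𝓞 K)) heq)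
    (by exact_mod_cast (Int.castRingHom (𝓞 K)).map_dvd hr)
    (by rw [hmul hαβ, CubicCoord.eval_vec]; push_cast; ring)
    ⟨α'.eval θ, by rw [hmul hα, CubicCoord.eval_vec]; push_cast; ring⟩
    ⟨β'.eval θ, by rw [hmul hβ, CubicCoord.eval_vec]; push_cast; ring⟩
  obtain ⟨γ, hγ, c, hc⟩ := h.exists_eval_mul_pow_three_eq hεε' hε hb
  have hγobs : γ.IsObstructed d := by
    rcases hγ with rfl | rfl | rfl
    exacts [hobs.1, hobs.2.1, hobs.2.2]
  have hzero : (![x, y, 0] : CubicCoord ℤ) = 0 :=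
    h.eq_zero_of_isObstructed hγobs (b := c)
      (by rw [← hc, CubicCoord.eval_vec]; push_cast; ring) rfl
  exact hxy.ne_zero_or_ne_zero.elim (fun hx => hx (congrFun hzero 0))
    fun hy => hy (congrFun hzero 1)

end IsPureCubic

theorem pow_three_ne_of_lt_of_lt {a d : ℤ} (had : a ^ 3 < d) (hda : d < (a + 1) ^ 3) (b : ℚ) :
    b ^ 3 ≠ d := by
  intro hb
  obtain ⟨n, rfl⟩ := IsIntegrallyClosed.exists_algebraMap_eq_of_isIntegral_pow (R := ℤ) three_pos
    (hb ▸ isIntegral_algebraMap (x := d) : IsIntegral ℤ (b ^ 3))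
  have hn : n ^ 3 = d := Int.cast_injective (α := ℚ) (by rw [← hb, Int.cast_pow]; rfl)
  have hodd : Odd 3 := by decide
  have han : a < n := hodd.pow_lt_pow.1 (hn ▸ had)
  have hna : n < a + 1 := hodd.pow_lt_pow.1 (hn ▸ hda)
  omega

section Congruences

variable {d m x y z : ℤ}

theorem not_dvd_and_dvd_of_isCoprime {p : ℤ} (hp : Prime p) (hxy : IsCoprime x y) :
    ¬ (p ∣ x ∧ p ∣ y) :=
  fun ⟨hx, hy⟩ => hp.not_isUnit (hxy.isUnit_of_dvd' hx hy)

theorem isCoprime_of_squarefree (hd : Squarefree d) (hxy : IsCoprime x y)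
    (heq : x ^ 3 + d * y ^ 3 = m * z ^ 3) : IsCoprime z d := by
  refine isCoprime_of_prime_dvd (fun h => hd.ne_zero h.2) fun p hp hpz hpd => ?_
  have hpz3 : p ^ 3 ∣ m * z ^ 3 := (pow_dvd_pow_of_dvd hpz 3).mul_left m
  have hpx : p ∣ x := hp.dvd_of_dvd_pow (n := 3) <| (dvd_add_left (hpd.mul_right (y ^ 3))).1 <|
    heq ▸ (dvd_pow_self p three_ne_zero).trans hpz3
  obtain ⟨e, rfl⟩ := hpd
  have hpe : ¬ p ∣ e := fun ⟨f, hf⟩ => hp.not_isUnit (hd p ⟨f, by rw [hf, mul_assoc]⟩)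
  have hpy : p * p ∣ p * (e * y ^ 3) := by
    rw [← mul_assoc, ← dvd_add_right (b := x ^ 3), heq]
    · exact (Dvd.intro p (by ring)).trans hpz3
    · exact (Dvd.intro p (by ring)).trans (pow_dvd_pow_of_dvd hpx 3)
  have hpy' : p ∣ e * y ^ 3 := (mul_dvd_mul_iff_left hp.ne_zero).1 hpy
  exact not_dvd_and_dvd_of_isCoprime hp hxy
    ⟨hpx, hp.dvd_of_dvd_pow ((hp.dvd_or_dvd hpy').resolve_left hpe)⟩

theorem dvd_of_natCast_mul_eq_zero {p k : ℕ} (hk : k ≠ 0)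
    (hx : (k : ZMod (p * k)) * (x : ZMod (p * k)) = 0) : (p : ℤ) ∣ x := by
  rw [← Int.cast_natCast k, ← Int.cast_mul, ZMod.intCast_zmod_eq_zero_iff_dvd, Nat.cast_mul,
    mul_comm (k : ℤ)] at hx
  exact (mul_dvd_mul_iff_right (Int.natCast_ne_zero.2 hk)).1 hx

theorem isCoprime_three_of_notMem (hd : (d : ZMod 9) ∉ ({0, 1, -1} : Finset (ZMod 9)))
    (hxy : IsCoprime x y) (heq : x ^ 3 + d * y ^ 3 = m * z ^ 3) : IsCoprime z 3 := by
  rw [isCoprime_comm, Int.prime_three.coprime_iff_not_dvd]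
  rintro ⟨w, rfl⟩
  have hmod : ∀ d a b : ZMod 9, d ∉ ({0, 1, -1} : Finset (ZMod 9)) → a ^ 3 + d * b ^ 3 = 0 →
      3 * a = 0 ∧ 3 * b = 0 := by decide +kernel
  have hnine : ((9 : ℕ) : ℤ) ∣ x ^ 3 + d * y ^ 3 := ⟨3 * m * w ^ 3, by rw [heq]; push_cast; ring⟩
  have hzero : (x : ZMod 9) ^ 3 + d * (y : ZMod 9) ^ 3 = 0 := by
    exact_mod_cast (ZMod.intCast_zmod_eq_zero_iff_dvd _ _).2 hnine
  obtain ⟨hx, hy⟩ := hmod _ _ _ hd hzero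
  exact not_dvd_and_dvd_of_isCoprime Int.prime_three hxy
    ⟨dvd_of_natCast_mul_eq_zero (p := 3) three_ne_zero hx,
      dvd_of_natCast_mul_eq_zero (p := 3) three_ne_zero hy⟩

theorem dvd_sub_mul_of_zmod {k : ℕ} {r : ℤ} (hk : k ≠ 0) (hxy : IsCoprime x y)
    (heq : x ^ 3 + d * y ^ 3 = (2 * k : ℕ) * z ^ 3)
    (hmod : ∀ a b : ZMod (2 * k), a ^ 3 + d * b ^ 3 = 0 → a = r * b ∨ k * a = 0 ∧ k * b = 0) :
    ((2 * k : ℕ) : ℤ) ∣ x - r * y := by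
  have hzero : (x : ZMod (2 * k)) ^ 3 + d * (y : ZMod (2 * k)) ^ 3 = 0 := by
    exact_mod_cast (ZMod.intCast_zmod_eq_zero_iff_dvd (x ^ 3 + d * y ^ 3) (2 * k)).2
      (heq ▸ dvd_mul_right _ _)
  rw [← ZMod.intCast_zmod_eq_zero_iff_dvd, Int.cast_sub, Int.cast_mul, sub_eq_zero]
  refine (hmod _ _ hzero).resolve_right fun ⟨hx, hy⟩ => ?_
  exact not_dvd_and_dvd_of_isCoprime Int.prime_two hxy
    ⟨dvd_of_natCast_mul_eq_zero hk hx, dvd_of_natCast_mul_eq_zero hk hy⟩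

end Congruences

theorem pow_three_add_two_mul_ne {x y z : ℤ} (hxy : IsCoprime x y) :
    x ^ 3 + 2 * y ^ 3 ≠ 30 * z ^ 3 := by
  intro heq
  obtain ⟨K, _, _, θ, h⟩ := IsPureCubic.exists_isPureCubic (d := 2)
    (pow_three_ne_of_lt_of_lt (a := 1) (by decide) (by decide))
  have := h.isPrincipalIdealRing_two
  refine h.pow_three_add_ne (m := 30) (r := 22) (α := ![0, -1, 2]) (β := ![4, 8, 1])
    (α' := ![3, 6, 1]) (β' := ![-3, -16, 33]) (ε := ![-1, 1, 0]) (ε' := ![1, 1, 1])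
    (by decide) (by decide) (by decide) (by decide) (by decide)
    (h.pow_three_ne_eval (p := 31) (x := ![3, 0, 1]) (by norm_num) (by decide) (by decide +kernel))
    ⟨?_, ?_, ?_⟩ hxy ?_ ?_ heq
  iterate 3
    exact CubicCoord.isObstructed_of_forall_lt 5 5 (by decide) (by decide) (by decide +kernel)
  · have h3 : IsCoprime z 3 := isCoprime_three_of_notMem (by decide) hxy heq
    exact h3.mul_right (isCoprime_of_squarefree Int.prime_two.squarefree hxy heq)
  · exact dvd_sub_mul_of_zmod (k := 15) (by decide) hxy heq (by decide +kernel)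

theorem pow_three_add_three_mul_ne {x y z : ℤ} (hxy : IsCoprime x y) :
    x ^ 3 + 3 * y ^ 3 ≠ 20 * z ^ 3 := by
  intro heq
  obtain ⟨K, _, _, θ, h⟩ := IsPureCubic.exists_isPureCubic (d := 3)
    (pow_three_ne_of_lt_of_lt (a := 1) (by decide) (by decide))
  have := h.isPrincipalIdealRing_three
  refine h.pow_three_add_ne (m := 20) (r := 13) (α := ![2, 1, -1]) (β := ![7, 1, 3])
    (α' := ![5, 1, 2]) (β' := ![19, 7, -9]) (ε := ![-2, 0, 1]) (ε' := ![4, 3, 2])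
    (by decide) (by decide) (by decide) (by decide) (by decide)
    (h.pow_three_ne_eval (p := 61) (x := ![4, -1, 0]) (by norm_num) (by decide) (by decide +kernel))
    ⟨?_, ?_, ?_⟩ hxy ?_ ?_ heq
  · exact CubicCoord.isObstructed_of_forall_lt 2 4 (by decide) (by decide) (by decide +kernel)
  · exact CubicCoord.isObstructed_of_three_dvd (by decide) (by decide) (by decide)
  · exact CubicCoord.isObstructed_of_forall_lt 2 4 (by decide) (by decide) (by decide +kernel)
  · have h3 : IsCoprime z 3 := isCoprime_three_of_notMem (by decide) hxy heq
    exact h3.mul_right (isCoprime_of_squarefree Int.prime_three.squarefree hxy heq)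
  · exact dvd_sub_mul_of_zmod (k := 10) (by decide) hxy heq (by decide +kernel)

theorem pow_three_add_five_mul_ne {x y z : ℤ} (hxy : IsCoprime x y) :
    x ^ 3 + 5 * y ^ 3 ≠ 12 * z ^ 3 := by
  intro heq
  obtain ⟨K, _, _, θ, h⟩ := IsPureCubic.exists_isPureCubic (d := 5)
    (pow_three_ne_of_lt_of_lt (a := 1) (by decide) (by decide))
  have := h.isPrincipalIdealRing_five
  refine h.pow_three_add_ne (m := 12) (r := 7) (α := ![-2, 3, -1]) (β := ![19, 11, 7])
    (α' := ![14, 8, 5]) (β' := ![-4, 13, -6]) (ε := ![1, -4, 2]) (ε' := ![41, 24, 14])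
    (by decide) (by decide) (by decide) (by decide) (by decide)
    (h.pow_three_ne_eval (p := 13) (x := ![2, 1, 0]) (by norm_num) (by decide) (by decide +kernel))
    ⟨?_, ?_, ?_⟩ hxy ?_ ?_ heq
  iterate 3
    exact CubicCoord.isObstructed_of_forall_lt 2 4 (by decide) (by decide) (by decide +kernel)
  · have h3 : IsCoprime z 3 := isCoprime_three_of_notMem (by decide) hxy heq
    have h5 : Prime (5 : ℤ) := Int.prime_ofNat_iff.2 (by norm_num)
    exact h3.mul_right (isCoprime_of_squarefree h5.squarefree hxy heq)
  · exact dvd_sub_mul_of_zmod (k := 6) (by decide) hxy heq (by decide +kernel)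

theorem pow_three_add_six_mul_ne {x y z : ℤ} (hxy : IsCoprime x y) :
    x ^ 3 + 6 * y ^ 3 ≠ 10 * z ^ 3 := by
  intro heq
  obtain ⟨K, _, _, θ, h⟩ := IsPureCubic.exists_isPureCubic (d := 6)
    (pow_three_ne_of_lt_of_lt (a := 1) (by decide) (by decide))
  have := h.isPrincipalIdealRing_six
  refine h.pow_three_add_ne (m := 10) (r := 4) (α := ![-2, 3, -1]) (β := ![22, 12, 7])
    (α' := ![13, 7, 4]) (β' := ![1, 5, -3]) (ε := ![1, -6, 3]) (ε' := ![109, 60, 33])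
    (by decide) (by decide) (by decide) (by decide) (by decide)
    (h.pow_three_ne_eval (p := 7) (x := ![1, 1, 0]) (by norm_num) (by decide) (by decide +kernel))
    ⟨?_, ?_, ?_⟩ hxy ?_ ?_ heq
  iterate 3 exact CubicCoord.isObstructed_of_three_dvd (by decide) (by decide) (by decide)
  · have h3 : IsCoprime z 3 := isCoprime_three_of_notMem (by decide) hxy heq
    have h6 : Squarefree (6 : ℤ) := Int.squarefree_natAbs.1 (by decide +kernel)
    exact h3.mul_right (isCoprime_of_squarefree h6 hxy heq)
  · exact dvd_sub_mul_of_zmod (k := 5) (by decide) hxy heq (by decide +kernel)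

section Eisenstein

variable {K : Type*} [Field K] {ζ : K} (hζ : IsPrimitiveRoot ζ 3)

theorem toInteger_sq_add_toInteger_add_one : hζ.toInteger ^ 2 + hζ.toInteger + 1 = 0 :=
  IsCyclotomicExtension.Rat.Three.eta_sq_add_eta_add_one hζ

theorem eq_zero_of_add_mul_toInteger_eq_zero [CharZero K] {a b : ℤ}
    (h : (a : 𝓞 K) + b * hζ.toInteger = 0) : a = 0 ∧ b = 0 := by
  have hnorm : a ^ 2 - a * b + b ^ 2 = 0 := Int.cast_injective (α := 𝓞 K) <| by
    push_cast
    linear_combination (a - b - b * hζ.toInteger : 𝓞 K) * h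
      + (b : 𝓞 K) ^ 2 * toInteger_sq_add_toInteger_add_one hζ
  constructor <;> nlinarith [sq_nonneg (2 * a - b), sq_nonneg (2 * b - a)]

theorem add_mul_toInteger_inj [CharZero K] {a b a' b' : ℤ} :
    (a : 𝓞 K) + b * hζ.toInteger = a' + b' * hζ.toInteger ↔ a = a' ∧ b = b' := by
  refine ⟨fun h => ?_, fun ⟨ha, hb⟩ => by rw [ha, hb]⟩
  have := eq_zero_of_add_mul_toInteger_eq_zero hζ (a := a - a') (b := b - b')
    (by push_cast; linear_combination h)
  omega

theorem add_mul_toInteger_pow_three (r t : ℤ) : ((r : 𝓞 K) + t * hζ.toInteger) ^ 3 =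
    (r ^ 3 + t ^ 3 - 3 * r * t ^ 2 : ℤ) + (3 * (r * t * (r - t)) : ℤ) * hζ.toInteger := by
  push_cast
  linear_combination (3 * r * t ^ 2 + t ^ 3 * (hζ.toInteger - 1) : 𝓞 K)
    * toInteger_sq_add_toInteger_add_one hζ

variable [NumberField K] [IsCyclotomicExtension {3} ℚ K]

theorem exists_eq_add_mul_toInteger (x : 𝓞 K) : ∃ a b : ℤ, x = a + b * hζ.toInteger := by
  obtain ⟨f, hf, rfl⟩ := hζ.integralPowerBasis.exists_eq_aeval x
  rw [hζ.integralPowerBasis_dim, Nat.totient_prime Nat.prime_three] at hf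
  obtain ⟨b, a, rfl⟩ := exists_eq_X_add_C_of_natDegree_le_one (Nat.le_of_lt_succ hf)
  exact ⟨a, b, by simp [add_comm]⟩

theorem three_dvd_add_mul_toInteger_iff {a b : ℤ} :
    3 ∣ (a : 𝓞 K) + b * hζ.toInteger ↔ 3 ∣ a ∧ 3 ∣ b := by
  constructor
  · rintro ⟨x, hx⟩
    obtain ⟨a', b', rfl⟩ := exists_eq_add_mul_toInteger hζ x
    have := (add_mul_toInteger_inj hζ (a := a) (b := b) (a' := 3 * a') (b' := 3 * b')).1
      (by push_cast; linear_combination hx)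
    exact ⟨⟨a', this.1⟩, ⟨b', this.2⟩⟩
  · rintro ⟨⟨a', rfl⟩, ⟨b', rfl⟩⟩
    exact ⟨a' + b' * hζ.toInteger, by push_cast; ring⟩

/-- Kummer's lemma: the unit is congruent to an integer modulo `3`. -/
theorem eq_one_or_eq_neg_one_of_pow_three_mul_eq {b : 𝓞 K} {u : (𝓞 K)ˣ} {c e : ℤ}
    (hc : ¬ 3 ∣ c) (he : 3 ∣ e) (h : b ^ 3 * u = c + e * hζ.toInteger) : u = 1 ∨ u = -1 := by
  obtain ⟨r, t, rfl⟩ := exists_eq_add_mul_toInteger hζ b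
  obtain ⟨f, rfl⟩ := he
  rw [add_mul_toInteger_pow_three] at h
  set A := r ^ 3 + t ^ 3 - 3 * r * t ^ 2
  set B := r * t * (r - t)
  have hA : ¬ 3 ∣ A := fun hA => by
    have hdvd : 3 ∣ (A : 𝓞 K) + (3 * B : ℤ) * hζ.toInteger :=
      (three_dvd_add_mul_toInteger_iff hζ).2 ⟨hA, dvd_mul_right 3 B⟩
    exact hc ((three_dvd_add_mul_toInteger_iff hζ).1 (h ▸ hdvd.mul_right (u : 𝓞 K))).1
  obtain ⟨i, j, hij⟩ := (Int.prime_three.coprime_iff_not_dvd.2 hA).symm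
  refine IsCyclotomicExtension.Rat.Three.eq_one_or_neg_one_of_unit_of_congruent hζ u ⟨i * c, ?_⟩
  have hlam : (hζ.toInteger - 1) ^ 2 ∣ (3 : 𝓞 K) :=
    ⟨1 + hζ.toInteger, by
      linear_combination (2 - hζ.toInteger) * toInteger_sq_add_toInteger_add_one hζ⟩
  refine hlam.trans ⟨i * (f - B * u) * hζ.toInteger + j * u, ?_⟩
  have hij' : (i : 𝓞 K) * A + j * 3 = 1 := by exact_mod_cast congrArg (Int.cast (R := 𝓞 K)) hij
  push_cast at h ⊢
  linear_combination i * h - u * hij'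

theorem exists_associated_pow_three_of_norm_eq {c e v : ℤ} (hce : IsCoprime c e) (he : 3 ∣ e)
    (h : c ^ 2 - c * e + e ^ 2 = v ^ 3) :
    ∃ b : 𝓞 K, Associated (b ^ 3) (c + e * hζ.toInteger) := by
  have := IsCyclotomicExtension.Rat.three_pid K
  have hve : IsCoprime (v ^ 3) e := by
    rw [← h, show c ^ 2 - c * e + e ^ 2 = c ^ 2 + e * (e - c) by ring]
    exact hce.pow_left.add_mul_left_left _
  obtain ⟨i, j, hij⟩ := hve.mul_right (hve.of_isCoprime_of_dvd_right he)
  have hij' : (i : 𝓞 K) * v ^ 3 + j * (e * 3) = 1 := by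
    exact_mod_cast congrArg (Int.cast (R := 𝓞 K)) hij
  have hη := toInteger_sq_add_toInteger_add_one hζ
  have hprod : ((c : 𝓞 K) + e * hζ.toInteger) * (c - e - e * hζ.toInteger) = v ^ 3 := by
    have h' : (c : 𝓞 K) ^ 2 - c * e + e ^ 2 = v ^ 3 := by
      exact_mod_cast congrArg (Int.cast (R := 𝓞 K)) h
    linear_combination h' - (e : 𝓞 K) ^ 2 * hη
  refine exists_associated_pow_of_mul_eq_pow' ?_ hprod
  refine ⟨i * (c - e - e * hζ.toInteger) - j * (1 + 2 * hζ.toInteger),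
    j * (1 + 2 * hζ.toInteger), ?_⟩
  linear_combination hij' + (i : 𝓞 K) * hprod - 4 * (j : 𝓞 K) * e * hη

end Eisenstein

theorem exists_three_mul_eq_of_norm_eq_pow_three {c e v : ℤ} (hce : IsCoprime c e) (he : 3 ∣ e)
    (h : c ^ 2 - c * e + e ^ 2 = v ^ 3) :
    ∃ r t : ℤ, IsCoprime r t ∧ 3 * (r * t * (r - t)) = e := by
  have : NeZero ((3 : ℕ) : ℚ) := ⟨by norm_num⟩
  have : IsCyclotomicExtension {3} ℚ (CyclotomicField 3 ℚ) :=
    CyclotomicField.isCyclotomicExtension 3 ℚ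
  have hζ := IsCyclotomicExtension.zeta_spec 3 ℚ (CyclotomicField 3 ℚ)
  obtain ⟨b, u, hu⟩ := exists_associated_pow_three_of_norm_eq hζ hce he h
  have hc : ¬ 3 ∣ c := fun hc => Int.prime_three.not_isUnit (hce.isUnit_of_dvd' hc he)
  obtain ⟨b', hb'⟩ : ∃ b', b' ^ 3 = (c : 𝓞 (CyclotomicField 3 ℚ)) + e * hζ.toInteger := by
    rw [← hu]
    rcases eq_one_or_eq_neg_one_of_pow_three_mul_eq hζ hc he hu with rfl | rfl
    · exact ⟨b, by simp⟩
    · exact ⟨-b, by simp [Odd.neg_pow (by decide : Odd 3)]⟩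
  obtain ⟨r, t, rfl⟩ := exists_eq_add_mul_toInteger hζ b'
  rw [add_mul_toInteger_pow_three, add_mul_toInteger_inj] at hb'
  obtain ⟨rfl, rfl⟩ := hb'
  obtain ⟨k, l, hkl⟩ := hce
  exact ⟨r, t, ⟨k * r ^ 2 + l * (3 * (t * (r - t))), k * (t ^ 2 - 3 * r * t),
    by linear_combination hkl⟩, rfl⟩

theorem exists_prod_eq_of_dvd_prod {ι α : Type*} [CommMonoid α] [DecompositionMonoid α]
    [Subsingleton αˣ] (s : Finset ι) (f : ι → α) {m : α} (h : m ∣ ∏ i ∈ s, f i) :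
    ∃ a : ι → α, (∀ i, a i ∣ f i) ∧ ∏ i ∈ s, a i = m := by
  classical
  induction s using Finset.induction_on generalizing m with
  | empty =>
    refine ⟨1, fun i => one_dvd _, ?_⟩
    simpa using (isUnit_of_dvd_one (by simpa using h) : IsUnit m).eq_one.symm
  | insert j s hj ih =>
    rw [Finset.prod_insert hj] at h
    obtain ⟨b, c, hb, hc, rfl⟩ := exists_dvd_and_dvd_of_dvd_mul h
    obtain ⟨a, ha, rfl⟩ := ih hc
    refine ⟨Function.update a j b, fun i => ?_, ?_⟩
    · obtain rfl | hij := eq_or_ne i j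
      · rwa [Function.update_self]
      · rw [Function.update_of_ne hij]
        exact ha i
    · rw [Finset.prod_insert hj, Function.update_self, Finset.prod_update_of_notMem hj]

theorem exists_natCast_mul_pow_eq_of_prod_eq {ι : Type*} [Fintype ι] {R : ι → ℤ} {m k : ℕ}
    {w : ℤ} (hR : Pairwise fun i j => IsCoprime (R i) (R j)) (hm : m ≠ 0) (hk : Odd k)
    (h : ∏ i, R i = m * w ^ k) :
    ∃ (a : ι → ℕ) (A : ι → ℤ), ∏ i, a i = m ∧ ∏ i, A i = w ∧ ∀ i, R i = a i * A i ^ k := by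
  classical
  have hdvd : m ∣ ∏ i, (R i).natAbs := by
    have := map_prod Int.natAbsHom R Finset.univ
    simp only [Int.natAbsHom_apply] at this
    rw [← this, h, Int.natAbs_mul, Int.natAbs_natCast]
    exact dvd_mul_right m _
  obtain ⟨a, ha, rfl⟩ := exists_prod_eq_of_dvd_prod Finset.univ _ hdvd
  choose S hS using fun i => Int.natCast_dvd.2 (ha i)
  have hprod : ∏ i, S i = w ^ k := by
    refine mul_left_cancel₀ (Nat.cast_ne_zero.2 hm) (Eq.trans ?_ h)
    rw [Nat.cast_prod, ← Finset.prod_mul_distrib]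
    exact Finset.prod_congr rfl fun i _ => (hS i).symm
  have hcop {i j : ι} (hij : i ≠ j) : IsCoprime (S i) (S j) := by
    have hRij : IsCoprime (R i) (R j) := hR hij
    rw [hS i, hS j] at hRij
    exact hRij.of_mul_left_right.of_mul_right_right
  choose A hA using fun i => Int.eq_pow_of_mul_eq_pow_odd_left
    (IsCoprime.prod_right fun j hj => hcop (Finset.ne_of_mem_erase hj).symm) hk
    ((Finset.mul_prod_erase _ S (Finset.mem_univ i)).trans hprod)
  refine ⟨a, A, rfl, hk.strictMono_pow.injective ?_, fun i => by rw [hS i, hA i]⟩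
  simp only [← Finset.prod_pow, ← hA, hprod]

theorem eq_of_mul_mul_eq_sixty {a b c : ℕ} (hab : a ≤ b) (hbc : b ≤ c) (h : a * b * c = 60)
    (cab : a.Coprime b) (cac : a.Coprime c) (cbc : b.Coprime c) :
    a = 1 ∧ b = 1 ∧ c = 60 ∨ a = 1 ∧ b = 3 ∧ c = 20 ∨ a = 1 ∧ b = 4 ∧ c = 15 ∨
      a = 1 ∧ b = 5 ∧ c = 12 ∨ a = 3 ∧ b = 4 ∧ c = 5 := by
  have ha0 : 0 < a := Nat.pos_of_ne_zero (by rintro rfl; simp at h)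
  have ha : a < 4 := by
    by_contra! ha
    have := Nat.mul_le_mul (Nat.mul_le_mul ha (ha.trans hab)) (ha.trans (hab.trans hbc))
    omega
  have hb : b < 8 := by
    by_contra! hb
    have := Nat.mul_le_mul (Nat.mul_le_mul ha0 hb) (hb.trans hbc)
    omega
  obtain rfl : c = 60 / (a * b) :=
    Nat.eq_div_of_mul_eq_right (mul_pos ha0 (ha0.trans_le hab)).ne' h
  interval_cases a <;> interval_cases b <;> revert h hbc cab cac cbc <;> decide

theorem eq_one_of_sum_mul_pow_three_eq_zero {a b c : ℕ} {A B C : ℤ} (hab : a ≤ b) (hbc : b ≤ c)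
    (h : a * b * c = 60) (cab : IsCoprime (a * A) (b * B)) (cac : IsCoprime (a * A) (c * C))
    (cbc : IsCoprime (b * B) (c * C)) (hsum : a * A ^ 3 + b * B ^ 3 + c * C ^ 3 = 0) :
    a = 1 ∧ b = 1 ∧ c = 60 := by
  have hAB : IsCoprime A B := cab.of_mul_left_right.of_mul_right_right
  rcases eq_of_mul_mul_eq_sixty hab hbc h
    (Nat.isCoprime_iff_coprime.1 cab.of_mul_left_left.of_mul_right_left)
    (Nat.isCoprime_iff_coprime.1 cac.of_mul_left_left.of_mul_right_left)
    (Nat.isCoprime_iff_coprime.1 cbc.of_mul_left_left.of_mul_right_left) with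
    h | ⟨rfl, rfl, rfl⟩ | ⟨rfl, rfl, rfl⟩ | ⟨rfl, rfl, rfl⟩ | ⟨rfl, rfl, rfl⟩ <;>
    push_cast at cab hsum
  · exact h
  · exact (pow_three_add_three_mul_ne hAB (z := -C) (by linear_combination hsum)).elim
  · have h2BA : IsCoprime (2 * B) A :=
      (cab.symm.of_isCoprime_of_dvd_left ⟨2, by ring⟩).of_mul_right_right
    exact (pow_three_add_two_mul_ne h2BA (z := -C) (by linear_combination 2 * hsum)).elim
  · exact (pow_three_add_five_mul_ne hAB (z := -C) (by linear_combination hsum)).elim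
  · have h2BA : IsCoprime (2 * B) A :=
      (cab.symm.of_isCoprime_of_dvd_left ⟨2, by ring⟩).of_mul_right_right
    exact (pow_three_add_six_mul_ne h2BA (z := -C) (by linear_combination 2 * hsum)).elim

theorem exists_pow_three_add_pow_three_eq_of_prod_eq {R : Fin 3 → ℤ} {w : ℤ}
    (hR : Pairwise fun i j => IsCoprime (R i) (R j)) (hsum : ∑ i, R i = 0)
    (hprod : ∏ i, R i = 60 * w ^ 3) :
    ∃ x y z : ℤ, IsCoprime y z ∧ y ^ 3 + z ^ 3 = 60 * x ^ 3 ∧ x ∣ w := by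
  obtain ⟨a, A, ha, hA, hRa⟩ :=
    exists_natCast_mul_pow_eq_of_prod_eq (m := 60) hR (by decide) (by decide : Odd 3) hprod
  have hcop {i j : Fin 3} (hij : i ≠ j) : IsCoprime (a i * A i) (a j * A j) := by
    have hRij : IsCoprime (R i) (R j) := hR hij
    rw [hRa i, hRa j] at hRij
    have hdvd (i : Fin 3) : (a i : ℤ) * A i ∣ a i * A i ^ 3 :=
      mul_dvd_mul_left _ (dvd_pow_self _ three_ne_zero)
    exact (hRij.of_isCoprime_of_dvd_left (hdvd i)).of_isCoprime_of_dvd_right (hdvd j)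
  set σ := Tuple.sort a
  have hσ {i j : Fin 3} (hij : i ≤ j) : a (σ i) ≤ a (σ j) := Tuple.monotone_sort a hij
  have hσcop {i j : Fin 3} (hij : i ≠ j) := hcop (σ.injective.ne hij)
  have hσsum : ∑ i, a (σ i) * A (σ i) ^ 3 = 0 := by
    rw [← hsum, Equiv.sum_comp σ fun i => a i * A i ^ 3]
    exact Finset.sum_congr rfl fun i _ => (hRa i).symm
  have hσprod : ∏ i, a (σ i) = 60 := (Equiv.prod_comp σ a).trans ha
  rw [Fin.sum_univ_three] at hσsum
  rw [Fin.prod_univ_three] at hσprod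
  obtain ⟨h0, h1, h2⟩ := eq_one_of_sum_mul_pow_three_eq_zero
    (hσ (by decide : (0 : Fin 3) ≤ 1)) (hσ (by decide : (1 : Fin 3) ≤ 2)) hσprod
    (hσcop (by decide)) (hσcop (by decide)) (hσcop (by decide)) hσsum
  rw [h0, h1, h2] at hσsum
  push_cast at hσsum
  refine ⟨-A (σ 2), A (σ 0), A (σ 1),
    (hσcop (i := 0) (j := 1) (by decide)).of_mul_left_right.of_mul_right_right,
    by linear_combination hσsum, ?_⟩
  rw [neg_dvd, ← hA]
  exact Finset.dvd_prod_of_mem A (Finset.mem_univ _)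

theorem isCoprime_sq_sub_three_mul_add {y s : ℤ} (h : IsCoprime y (3 * s)) :
    IsCoprime 180 (y ^ 2 - 3 * s * y + 3 * s ^ 2) := by
  have hprime {p : ℕ} (hp : p.Prime) (hmod : ∀ y s : ZMod p,
      y ^ 2 - 3 * s * y + 3 * s ^ 2 = 0 → y = 0 ∧ 3 * s = 0) :
      IsCoprime (p : ℤ) (y ^ 2 - 3 * s * y + 3 * s ^ 2) := by
    have hp' := Nat.prime_iff_prime_int.1 hp
    refine hp'.coprime_iff_not_dvd.2 fun hdvd => not_dvd_and_dvd_of_isCoprime hp' h ?_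
    rw [← ZMod.intCast_zmod_eq_zero_iff_dvd] at hdvd
    simpa only [← ZMod.intCast_zmod_eq_zero_iff_dvd, Int.cast_mul, Int.cast_ofNat] using
      hmod y s (by exact_mod_cast hdvd)
  have h2 : IsCoprime 2 (y ^ 2 - 3 * s * y + 3 * s ^ 2) := hprime Nat.prime_two (by decide)
  have h5 : IsCoprime 5 (y ^ 2 - 3 * s * y + 3 * s ^ 2) := hprime Nat.prime_five (by decide)
  have h3 : IsCoprime 3 (y ^ 2 - 3 * s * y + 3 * s ^ 2) := by
    rw [show y ^ 2 - 3 * s * y + 3 * s ^ 2 = y ^ 2 + 3 * (s ^ 2 - s * y) by ring]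
    exact h.of_mul_right_left.symm.pow_right.add_mul_left_right _
  exact ((h2.pow_left (m := 2)).mul_left (h3.pow_left (m := 2))).mul_left h5

theorem exists_add_eq_of_pow_three_add_pow_three_eq {x y z : ℤ} (hyz : IsCoprime y z)
    (h : y ^ 3 + z ^ 3 = 60 * x ^ 3) :
    ∃ u v : ℤ, y + z = 540 * u ^ 3 ∧ y ^ 2 - y * z + z ^ 2 = 3 * v ^ 3 ∧ x = 3 * (u * v) := by
  obtain ⟨s, hs⟩ : 3 ∣ y + z := by
    have hmod : ((y ^ 3 + z ^ 3 : ℤ) : ZMod 3) = (y + z : ℤ) := by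
      push_cast
      rw [ZMod.pow_card, ZMod.pow_card]
    refine (ZMod.intCast_zmod_eq_zero_iff_dvd _ 3).1 (hmod ▸ ?_)
    exact (ZMod.intCast_zmod_eq_zero_iff_dvd _ 3).2 ⟨20 * x ^ 3, by rw [h]; push_cast; ring⟩
  obtain rfl : z = 3 * s - y := by linear_combination hs
  obtain ⟨q, hq⟩ : ∃ q, q = y ^ 2 - 3 * s * y + 3 * s ^ 2 := ⟨_, rfl⟩
  have hys : IsCoprime y (3 * s) := by
    simpa using hyz.add_mul_left_right 1
  have hsq : IsCoprime s q := by
    rw [hq, show y ^ 2 - 3 * s * y + 3 * s ^ 2 = y ^ 2 + s * (3 * s - 3 * y) by ring]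
    exact hys.of_mul_right_right.symm.pow_right.add_mul_left_right _
  have hfactor : 3 * s * q = 20 * x ^ 3 := by
    rw [hq]
    linarith
  obtain ⟨w, rfl⟩ : 3 ∣ x := by
    have hdvd : 3 ∣ 20 * x ^ 3 := ⟨s * q, by rw [← hfactor, mul_assoc]⟩
    exact Int.prime_three.dvd_of_dvd_pow
      ((Int.prime_three.dvd_or_dvd hdvd).resolve_left (by decide))
  obtain ⟨a, rfl⟩ : 180 ∣ s :=
    (hq ▸ isCoprime_sq_sub_three_mul_add hys).dvd_of_dvd_mul_right ⟨w ^ 3, by linarith⟩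
  have haq : a * q = w ^ 3 := by linarith
  obtain ⟨⟨u, rfl⟩, ⟨v, hv⟩⟩ :=
    Int.eq_pow_of_mul_eq_pow_odd hsq.of_mul_left_right (by decide : Odd 3) haq
  refine ⟨u, v, by ring, by rw [← hv, hq]; ring, ?_⟩
  rw [hv, ← mul_pow] at haq
  rw [(Odd.strictMono_pow (by decide : Odd 3)).injective haq]

theorem exists_mul_mul_sub_eq_of_pow_three_add_pow_three_eq {x y z : ℤ} (hyz : IsCoprime y z)
    (h : y ^ 3 + z ^ 3 = 60 * x ^ 3) :
    ∃ r t u : ℤ, IsCoprime r t ∧ r * t * (r - t) = 60 * u ^ 3 ∧ 3 * u ∣ x := by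
  obtain ⟨u, v, hadd, hmul, rfl⟩ := exists_add_eq_of_pow_three_add_pow_three_eq hyz h
  obtain rfl : z = 540 * u ^ 3 - y := by linear_combination hadd
  have hyu : IsCoprime y (180 * u ^ 3) := by
    have := hyz.add_mul_left_right 1
    exact this.of_isCoprime_of_dvd_right ⟨3, by ring⟩
  have hce : IsCoprime (y - 180 * u ^ 3) (180 * u ^ 3) := by
    simpa [sub_eq_add_neg] using hyu.add_mul_left_left (-1)
  obtain ⟨r, t, hrt, heq⟩ := exists_three_mul_eq_of_norm_eq_pow_three (v := v) hce
    ⟨60 * u ^ 3, by ring⟩ (by linarith)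
  exact ⟨r, t, u, hrt, by linarith, v, by ring⟩

theorem exists_three_mul_dvd_of_pow_three_add_pow_three_eq {x y z : ℤ} (hyz : IsCoprime y z)
    (h : y ^ 3 + z ^ 3 = 60 * x ^ 3) :
    ∃ x' y' z' : ℤ, IsCoprime y' z' ∧ y' ^ 3 + z' ^ 3 = 60 * x' ^ 3 ∧ 3 * x' ∣ x := by
  obtain ⟨r, t, u, hrt, hu, hux⟩ := exists_mul_mul_sub_eq_of_pow_three_add_pow_three_eq hyz h
  have hrs : IsCoprime r (t - r) := by
    simpa [sub_eq_add_neg] using hrt.add_mul_left_right (-1)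
  have hts : IsCoprime t (t - r) := by
    simpa [sub_eq_neg_add] using hrt.symm.neg_right.add_mul_left_right 1
  have hcop : Pairwise fun i j => IsCoprime (![r, -t, t - r] i) (![r, -t, t - r] j) := by
    intro i j hij
    fin_cases i <;> fin_cases j <;>
      first
        | exact (hij rfl).elim
        | exact hrt.neg_right
        | exact hrt.neg_right.symm
        | exact hrs
        | exact hrs.symm
        | exact hts.neg_left
        | exact hts.neg_left.symm
  obtain ⟨x', y', z', hyz', h', hxu⟩ := exists_pow_three_add_pow_three_eq_of_prod_eq (w := u) hcop
    (by simp [Fin.sum_univ_three]; ring) (by simp [Fin.prod_univ_three, ← hu]; ring)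
  exact ⟨x', y', z', hyz', h', (mul_dvd_mul_left 3 hxu).trans hux⟩

theorem eq_zero_of_pow_three_add_pow_three_eq {x y z : ℤ} (hyz : IsCoprime y z)
    (h : y ^ 3 + z ^ 3 = 60 * x ^ 3) : x = 0 := by
  have hdvd (n : ℕ) : 3 ^ n ∣ x := by
    induction n generalizing x y z with
    | zero => exact one_dvd x
    | succ n ih =>
      obtain ⟨x', y', z', hyz', h', hx'⟩ := exists_three_mul_dvd_of_pow_three_add_pow_three_eq hyz h
      rw [pow_succ']
      exact (mul_dvd_mul_left 3 (ih hyz' h')).trans hx'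
  by_contra hx
  obtain ⟨n, hn⟩ := Int.finiteMultiplicity_iff.2 ⟨(by decide : (3 : ℤ).natAbs ≠ 1), hx⟩
  exact hn (hdvd (n + 1))

theorem exists_isCoprime_and_eq_mul_algebraMap (R : Type*) {K : Type*} [CommRing R] [IsDomain R]
    [IsPrincipalIdealRing R] [Field K] [Algebra R K] [IsFractionRing R K] (y z : K) :
    ∃ (g : K) (a b : R), IsCoprime a b ∧ y = g * algebraMap R K a ∧ z = g * algebraMap R K b := by
  rcases eq_or_ne z 0 with rfl | hz
  · exact ⟨y, 1, 0, isCoprime_one_left, by simp, by simp⟩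
  obtain ⟨a, b, hab, hyz⟩ := IsFractionRing.exists_reduced_fraction R (y / z)
  have hb : algebraMap R K b ≠ 0 := IsFractionRing.to_map_ne_zero_of_mem_nonZeroDivisors b.2
  rw [IsFractionRing.mk'_eq_div, div_eq_div_iff hb hz] at hyz
  refine ⟨z / algebraMap R K b, a, b, hab.isCoprime, ?_, by field_simp⟩
  field_simp
  rw [← hyz, mul_comm]

theorem exists_intCast_eq_of_mul_pow_eq {m k : ℕ} {n : ℤ} {x : ℚ}
    (hm : ∀ d : ℕ, d ^ k ∣ m → d = 1) (h : m * x ^ k = n) : ∃ a : ℤ, (a : ℚ) = x := by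
  have hcop : IsCoprime ((x.den : ℤ) ^ k) (x.num ^ k) :=
    (Int.isCoprime_iff_nat_coprime.2 (by simpa using x.reduced.symm)).pow
  have heq : m * x.num ^ k = n * x.den ^ k := by
    have : (m * x.num ^ k : ℚ) = n * x.den ^ k := by
      rw [← h, ← Rat.mul_den_eq_num x]
      ring
    exact_mod_cast this
  have hden : (x.den : ℤ) ^ k ∣ m := hcop.dvd_of_dvd_mul_right (heq ▸ dvd_mul_left _ _)
  exact ⟨x.num, Rat.coe_int_num_of_den_eq_one (hm x.den (by exact_mod_cast hden))⟩

theorem eq_one_of_pow_three_dvd_sixty {d : ℕ} (h : d ^ 3 ∣ 60) : d = 1 := by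
  have hd : d < 4 :=
    lt_of_pow_lt_pow_left₀ 3 (Nat.zero_le 4) ((Nat.le_of_dvd (by decide) h).trans_lt (by decide))
  interval_cases d <;> revert h <;> decide

/-- The only rational solutions of `60x³ + y³ + z³ = 0` are the scalar multiples of
`(0, 1, -1)`. -/
theorem jacobian_unique_rational_point (x y z : ℚ)
    (h : 60 * x ^ 3 + y ^ 3 + z ^ 3 = 0) : x = 0 ∧ z = -y := by
  have hodd : Odd 3 := by decide
  suffices hx : x = 0 by
    refine ⟨hx, hodd.strictMono_pow.injective ?_⟩
    subst hx
    linear_combination h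
  obtain ⟨g, b, c, hbc, rfl, rfl⟩ := exists_isCoprime_and_eq_mul_algebraMap ℤ y z
  simp only [eq_intCast] at h
  rcases eq_or_ne g 0 with rfl | hg
  · simpa using h
  have hint : (60 : ℕ) * (-x / g) ^ 3 = (b ^ 3 + c ^ 3 : ℤ) := by
    push_cast
    field_simp
    linear_combination -h
  obtain ⟨a, ha⟩ := exists_intCast_eq_of_mul_pow_eq (fun _ => eq_one_of_pow_three_dvd_sixty) hint
  have habc : b ^ 3 + c ^ 3 = 60 * a ^ 3 := by rw [← ha] at hint; exact_mod_cast hint.symm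
  rw [eq_zero_of_pow_three_add_pow_three_eq hbc habc] at ha
  field_simp at ha
  simpa using ha
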